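/- arXiv:1910.10430 — 5 statements merged into one kernel-verified Lean document; each statement's English description precedes it below -/
import Mathlib

section
/- Let a be a real number with 0 < a < 1/2 or 1/2 < a < 1. Then the (analytically continued) periodic zeta function does not vanish at any real point: for every real σ, Li_σ(e^{2πia}) ≠ 0. -/
open HurwitzZeta Complex

/-!
For `σ > 0` the generating function of the coefficients `e^{2πian}` gives the Mellin transform
`Γ(s) Li_s(z) = ∫₀^∞ x^{s-1} z e^{-x} / (1 - z e^{-x}) dx`, first for `Re s > 1` and then for
`Re s > 0` by analytic continuation. At real `s` the imaginary part of the integrand has the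
constant sign of `Im z = sin (2πa)`.

For `x > 1`, Hurwitz's formula writes `Li_{1-x}(z)` as `(2π)^{-x} Γ(x)` times a combination of
`ζ(x, a)` and `ζ(x, 1 - a)` with unimodular coefficients. The two Hurwitz zeta values are positive
and, comparing their series termwise, differ by at least `|a^{-x} - (1 - a)^{-x}|`. The resulting
lower bound for `|Li_{1-x}(z)|` survives in the limit `x → 1`, which settles `σ ≤ 0`.
-/

open Set Filter Topology MeasureTheory Asymptotics

theorem im_mellin_pos {f : ℝ → ℂ} {σ : ℝ} (hf : MellinConvergent f σ)
    (hpos : ∀ t ∈ Ioi (0 : ℝ), 0 < (f t).im) : 0 < (mellin f σ).im := by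
  have hpos' : ∀ t ∈ Ioi (0 : ℝ), 0 < ((t : ℂ) ^ ((σ : ℂ) - 1) • f t).im := fun t ht ↦ by
    rw [← ofReal_one, ← ofReal_sub, ← ofReal_cpow (le_of_lt ht), smul_eq_mul, im_ofReal_mul]
    exact mul_pos (Real.rpow_pos_of_pos ht _) (hpos t ht)
  have hint : (mellin f σ).im = ∫ t in Ioi (0 : ℝ), ((t : ℂ) ^ ((σ : ℂ) - 1) • f t).im :=
    (integral_im hf).symm
  have hsupp : Ioi 0 ⊆ Function.support fun t : ℝ ↦ ((t : ℂ) ^ ((σ : ℂ) - 1) • f t).im :=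
    fun t ht ↦ (hpos' t ht).ne'
  rw [hint, setIntegral_pos_iff_support_of_nonneg_ae
    (ae_restrict_of_forall_mem measurableSet_Ioi fun t ht ↦ (hpos' t ht).le) hf.im,
    inter_eq_right.mpr hsupp, Real.volume_Ioi]
  exact ENNReal.zero_lt_top

/-- The Bose–Einstein kernel `1 / (z⁻¹ e^t - 1)`, whose Mellin transform is `Γ(s) Li_s(z)`. It is
written in terms of `z e^{-t}`, the ratio of the geometric series `∑ z ^ (n + 1) e^{-(n + 1) t}`
that it sums. -/
noncomputable def polylogKernel (z : ℂ) (t : ℝ) : ℂ :=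
  z * Real.exp (-t) / (1 - z * Real.exp (-t))

section PolylogKernel

variable {z : ℂ}

theorem im_polylogKernel (z : ℂ) (t : ℝ) :
    (polylogKernel z t).im = z.im * (Real.exp (-t) / normSq (1 - z * Real.exp (-t))) := by
  simp only [polylogKernel, div_im, sub_re, sub_im, one_re, one_im, re_mul_ofReal, im_mul_ofReal]
  ring

theorem one_sub_mul_exp_neg_ne_zero (hz : ‖z‖ ≤ 1) (hz1 : z ≠ 1) {t : ℝ} (ht : 0 ≤ t) :
    1 - z * Real.exp (-t) ≠ 0 := by
  intro h
  have hmul : z * Real.exp (-t) = 1 := (sub_eq_zero.mp h).symm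
  have hnorm : ‖z‖ * Real.exp (-t) = 1 := by
    simpa [Complex.norm_exp] using congrArg norm hmul
  have ht0 : t = 0 := by
    have : 1 ≤ Real.exp (-t) := hnorm ▸ mul_le_of_le_one_left (Real.exp_pos _).le hz
    linarith [Real.one_le_exp_iff.mp this]
  exact hz1 (by simpa [ht0] using hmul)

theorem continuousOn_polylogKernel (hz : ‖z‖ ≤ 1) (hz1 : z ≠ 1) :
    ContinuousOn (polylogKernel z) (Ici 0) := by
  unfold polylogKernel
  exact ContinuousOn.div (by fun_prop) (by fun_prop) fun t ht ↦
    one_sub_mul_exp_neg_ne_zero hz hz1 ht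

theorem isBigO_atTop_polylogKernel (z : ℂ) :
    polylogKernel z =O[atTop] fun t ↦ Real.exp (-t) := by
  have hexp : Tendsto (fun t : ℝ ↦ ((Real.exp (-t) : ℝ) : ℂ)) atTop (𝓝 0) :=
    (continuous_ofReal.tendsto 0).comp Real.tendsto_exp_neg_atTop_nhds_zero
  have hquot : Tendsto (fun t : ℝ ↦ z / (1 - z * Real.exp (-t))) atTop (𝓝 (z / (1 - z * 0))) :=
    tendsto_const_nhds.div ((hexp.const_mul z).const_sub 1) (by simp)
  refine ((hquot.isBigO_one ℝ).mul (isBigO_ofReal_left.mpr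
    (isBigO_refl (fun t : ℝ ↦ Real.exp (-t)) atTop))).congr (fun t ↦ ?_) fun t ↦ ?_
  · rw [polylogKernel, div_mul_eq_mul_div]
  · rw [one_mul]

theorem isBigO_nhdsGT_zero_polylogKernel (hz : ‖z‖ ≤ 1) (hz1 : z ≠ 1) :
    polylogKernel z =O[𝓝[>] 0] fun _ ↦ (1 : ℝ) :=
  ((continuousOn_polylogKernel hz hz1 0 self_mem_Ici).mono_left
    (nhdsWithin_mono _ Ioi_subset_Ici_self)).isBigO_one ℝ

theorem locallyIntegrableOn_polylogKernel (hz : ‖z‖ ≤ 1) (hz1 : z ≠ 1) :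
    LocallyIntegrableOn (polylogKernel z) (Ioi 0) :=
  ((continuousOn_polylogKernel hz hz1).mono Ioi_subset_Ici_self).locallyIntegrableOn
    measurableSet_Ioi

theorem mellinConvergent_polylogKernel (hz : ‖z‖ ≤ 1) (hz1 : z ≠ 1) {s : ℂ} (hs : 0 < s.re) :
    MellinConvergent (polylogKernel z) s :=
  mellinConvergent_of_isBigO_rpow_exp one_pos (locallyIntegrableOn_polylogKernel hz hz1)
    (by simpa using isBigO_atTop_polylogKernel z)
    (by simpa using isBigO_nhdsGT_zero_polylogKernel hz hz1) hs

theorem differentiableAt_mellin_polylogKernel (hz : ‖z‖ ≤ 1) (hz1 : z ≠ 1) {s : ℂ}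
    (hs : 0 < s.re) : DifferentiableAt ℂ (mellin (polylogKernel z)) s :=
  mellin_differentiableAt_of_isBigO_rpow_exp one_pos (locallyIntegrableOn_polylogKernel hz hz1)
    (by simpa using isBigO_atTop_polylogKernel z)
    (by simpa using isBigO_nhdsGT_zero_polylogKernel hz hz1) hs

theorem hasSum_polylogKernel (hz : ‖z‖ ≤ 1) {t : ℝ} (ht : 0 < t) :
    HasSum (fun n : ℕ ↦ z ^ (n + 1) * Real.exp (-((n : ℝ) + 1) * t)) (polylogKernel z t) := by
  have hnorm : ‖z * Real.exp (-t)‖ < 1 := by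
    rw [norm_mul, norm_real, Real.norm_of_nonneg (Real.exp_pos _).le]
    exact mul_lt_one_of_nonneg_of_lt_one_right hz (Real.exp_pos _).le
      (Real.exp_lt_one_iff.mpr (neg_neg_of_pos ht))
  rw [polylogKernel, div_eq_mul_inv]
  refine ((hasSum_geometric_of_norm_lt_one hnorm).mul_left _).congr_fun fun n ↦ ?_
  have hexp : Real.exp (-((n : ℝ) + 1) * t) = Real.exp (-t) ^ (n + 1) := by
    rw [← Real.exp_nat_mul]
    push_cast
    ring_nf
  rw [hexp, ofReal_pow, ← mul_pow, pow_succ']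

theorem hasSum_mellin_polylogKernel (hz : ‖z‖ ≤ 1) {s : ℂ} (hs : 1 < s.re) :
    HasSum (fun n : ℕ ↦ Gamma s * z ^ (n + 1) / ((n : ℂ) + 1) ^ s)
      (mellin (polylogKernel z) s) := by
  have hsum : Summable fun n : ℕ ↦ ‖z ^ (n + 1)‖ / ((n : ℝ) + 1) ^ s.re := by
    have hzeta : Summable fun n : ℕ ↦ 1 / ((n : ℝ) + 1) ^ s.re := by
      exact_mod_cast (summable_nat_add_iff 1).mpr (Real.summable_one_div_nat_rpow.mpr hs)
    refine hzeta.of_nonneg_of_le (fun n ↦ by positivity) fun n ↦ ?_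
    gcongr
    exact norm_pow z (n + 1) ▸ pow_le_one₀ (norm_nonneg z) hz
  simpa using hasSum_mellin (fun n : ℕ ↦ Or.inr (by positivity)) (one_pos.trans hs)
    (fun t ht ↦ hasSum_polylogKernel hz ht) hsum

end PolylogKernel

section PositiveAxis

variable {a : ℝ}

theorem norm_exp_two_pi_I_mul_ofReal (a : ℝ) : ‖cexp (2 * Real.pi * I * a)‖ = 1 := by
  simp [Complex.norm_exp]

theorem im_exp_two_pi_I_mul_ofReal (a : ℝ) :
    (cexp (2 * Real.pi * I * a)).im = Real.sin (2 * Real.pi * a) := by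
  rw [show 2 * (Real.pi : ℂ) * I * a = ((2 * Real.pi * a : ℝ) : ℂ) * I by push_cast; ring,
    exp_ofReal_mul_I_im]

theorem coe_unitAddCircle_ne_zero_of_exp_ne_one (ha : cexp (2 * Real.pi * I * a) ≠ 1) :
    (a : UnitAddCircle) ≠ 0 := by
  rw [Ne, AddCircle.coe_eq_zero_iff]
  rintro ⟨n, rfl⟩
  refine ha (Complex.exp_eq_one_iff.mpr ⟨n, ?_⟩)
  push_cast [zsmul_eq_mul]
  ring

theorem Gamma_mul_expZeta_of_one_lt_re (a : ℝ) {s : ℂ} (hs : 1 < s.re) :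
    Gamma s * expZeta (a : UnitAddCircle) s =
      mellin (polylogKernel (cexp (2 * Real.pi * I * a))) s := by
  have hs0 : s ≠ 0 := ne_zero_of_one_lt_re hs
  have hLi := ((hasSum_nat_add_iff' 1).mpr (hasSum_expZeta_of_one_lt_re a hs)).mul_left (Gamma s)
  simp only [Finset.range_one, Finset.sum_singleton, Nat.cast_zero, zero_cpow hs0, div_zero,
    sub_zero] at hLi
  refine (hLi.congr_fun fun n ↦ ?_).unique
    (hasSum_mellin_polylogKernel (norm_exp_two_pi_I_mul_ofReal a).le hs)
  rw [← Complex.exp_nat_mul, mul_comm ((n + 1 : ℕ) : ℂ), mul_div_assoc, Nat.cast_succ]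

theorem Gamma_mul_expZeta (ha : cexp (2 * Real.pi * I * a) ≠ 1) {s : ℂ} (hs : 0 < s.re) :
    Gamma s * expZeta (a : UnitAddCircle) s =
      mellin (polylogKernel (cexp (2 * Real.pi * I * a))) s := by
  have hopen : IsOpen {s : ℂ | 0 < s.re} := isOpen_lt continuous_const continuous_re
  have hleft : DifferentiableOn ℂ (fun s ↦ Gamma s * expZeta (a : UnitAddCircle) s)
      {s : ℂ | 0 < s.re} := fun s (hs : 0 < s.re) ↦
    ((differentiableAt_Gamma s fun m hm ↦ hs.not_ge (by simp [hm])).mul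
      (differentiable_expZeta_of_ne_zero
        (coe_unitAddCircle_ne_zero_of_exp_ne_one ha) s)).differentiableWithinAt
  have hright : DifferentiableOn ℂ (mellin (polylogKernel (cexp (2 * Real.pi * I * a))))
      {s : ℂ | 0 < s.re} := fun s hs ↦
    (differentiableAt_mellin_polylogKernel (norm_exp_two_pi_I_mul_ofReal a).le ha
      hs).differentiableWithinAt
  have hnear : ∀ᶠ s in 𝓝 (2 : ℂ), 1 < s.re :=
    (isOpen_lt continuous_const continuous_re).mem_nhds (by simp)
  exact (hleft.analyticOnNhd hopen).eqOn_of_preconnected_of_eventuallyEq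
    (hright.analyticOnNhd hopen) (convex_halfSpace_re_gt 0).isPreconnected
    (show (0 : ℝ) < (2 : ℂ).re by simp)
    (hnear.mono fun _ ↦ Gamma_mul_expZeta_of_one_lt_re a) hs

theorem sin_mul_im_expZeta_pos (ha : Real.sin (2 * Real.pi * a) ≠ 0) {σ : ℝ} (hσ : 0 < σ) :
    0 < Real.sin (2 * Real.pi * a) * (expZeta (a : UnitAddCircle) σ).im := by
  set z := cexp (2 * Real.pi * I * a)
  have hzim : z.im = Real.sin (2 * Real.pi * a) := im_exp_two_pi_I_mul_ofReal a
  have hz1 : z ≠ 1 := fun h ↦ ha (by rw [← hzim, h, one_im])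
  have hznorm : ‖z‖ ≤ 1 := (norm_exp_two_pi_I_mul_ofReal a).le
  have hpos : 0 < (mellin (fun t ↦ z.im • polylogKernel z t) σ).im := by
    refine im_mellin_pos ((mellinConvergent_polylogKernel hznorm hz1 hσ).const_smul z.im)
      fun t ht ↦ ?_
    have hden : 0 < normSq (1 - z * Real.exp (-t)) :=
      normSq_pos.mpr (one_sub_mul_exp_neg_ne_zero hznorm hz1 (le_of_lt ht))
    rw [smul_im, smul_eq_mul, im_polylogKernel, ← mul_assoc]
    exact mul_pos (mul_self_pos.mpr (hzim ▸ ha)) (div_pos (Real.exp_pos _) hden)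
  rw [mellin_const_smul, ← Gamma_mul_expZeta hz1 hσ, Gamma_ofReal, smul_im, smul_eq_mul,
    im_ofReal_mul, hzim, mul_left_comm] at hpos
  exact (pos_iff_pos_of_mul_pos hpos).mp (Real.Gamma_pos_of_pos hσ)

end PositiveAxis

section NegativeAxis

variable {a x : ℝ}

theorem hasSum_norm_hurwitzZeta (ha : a ∈ Icc 0 1) (hx : 1 < x) :
    HasSum (fun n : ℕ ↦ 1 / ((n : ℝ) + a) ^ x) ‖hurwitzZeta (a : UnitAddCircle) x‖ := by
  have hbase (n : ℕ) : 0 ≤ (n : ℝ) + a := add_nonneg n.cast_nonneg ha.1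
  have hC : HasSum (fun n : ℕ ↦ ((1 / ((n : ℝ) + a) ^ x : ℝ) : ℂ))
      (hurwitzZeta (a : UnitAddCircle) x) := by
    refine (hasSum_hurwitzZeta_of_one_lt_re ha (by simpa using hx)).congr_fun fun n ↦ ?_
    push_cast [ofReal_cpow (hbase n)]
    rfl
  have hR := hasSum_re hC
  simp only [ofReal_re] at hR
  have hreal : hurwitzZeta (a : UnitAddCircle) x = ((hurwitzZeta (a : UnitAddCircle) x).re : ℂ) :=
    hC.unique (by exact_mod_cast hR)
  have hnonneg : 0 ≤ (hurwitzZeta (a : UnitAddCircle) x).re :=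
    hR.nonneg fun n ↦ one_div_nonneg.mpr (Real.rpow_nonneg (hbase n) x)
  rwa [hreal, norm_real, Real.norm_of_nonneg hnonneg]

theorem coe_one_sub_unitAddCircle (a : ℝ) :
    ((1 - a : ℝ) : UnitAddCircle) = -(a : UnitAddCircle) := by
  rw [AddCircle.coe_sub, AddCircle.coe_period, zero_sub]

theorem one_div_rpow_sub_le_norm_hurwitzZeta_sub (ha0 : 0 < a) (ha : a ≤ 1 / 2) (hx : 1 < x) :
    1 / a ^ x - 1 / (1 - a) ^ x ≤
      ‖hurwitzZeta (a : UnitAddCircle) x‖ - ‖hurwitzZeta (-a : UnitAddCircle) x‖ := by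
  have hsum := (hasSum_norm_hurwitzZeta (a := a) ⟨ha0.le, by linarith⟩ hx).sub
    (hasSum_norm_hurwitzZeta (a := 1 - a) ⟨by linarith, by linarith⟩ hx)
  rw [coe_one_sub_unitAddCircle] at hsum
  have hterm (n : ℕ) : 0 ≤ 1 / ((n : ℝ) + a) ^ x - 1 / ((n : ℝ) + (1 - a)) ^ x := by
    have : 0 < (n : ℝ) + a := by positivity
    rw [sub_nonneg]
    gcongr
    linarith
  simpa using le_hasSum hsum 0 fun n _ ↦ hterm n

theorem abs_one_div_rpow_sub_le_abs_norm_hurwitzZeta_sub (ha : a ∈ Ioo 0 1) (hx : 1 < x) :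
    |1 / a ^ x - 1 / (1 - a) ^ x| ≤
      |‖hurwitzZeta (a : UnitAddCircle) x‖ - ‖hurwitzZeta (-a : UnitAddCircle) x‖| := by
  wlog hhalf : a ≤ 1 / 2 generalizing a
  · have h := this (a := 1 - a) ⟨by linarith [ha.2], by linarith [ha.1]⟩ (by linarith)
    rwa [coe_one_sub_unitAddCircle, neg_neg, sub_sub_cancel, abs_sub_comm,
      abs_sub_comm ‖_‖] at h
  have hnonneg : 0 ≤ 1 / a ^ x - 1 / (1 - a) ^ x := by
    have := ha.1
    rw [sub_nonneg]
    gcongr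
    linarith
  rw [abs_of_nonneg hnonneg]
  exact (one_div_rpow_sub_le_norm_hurwitzZeta_sub ha.1 hhalf hx).trans (le_abs_self _)

theorem mul_abs_norm_hurwitzZeta_sub_le_norm_expZeta_one_sub (a : UnitAddCircle) (hx : 1 < x) :
    (2 * Real.pi) ^ (-x) * Real.Gamma x * |‖hurwitzZeta a x‖ - ‖hurwitzZeta (-a) x‖| ≤
      ‖expZeta a (1 - x)‖ := by
  have hne (n : ℕ) : (x : ℂ) ≠ 1 - n := by
    have : x ≠ 1 - n := by linarith [(n.cast_nonneg : (0 : ℝ) ≤ n)]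
    exact_mod_cast this
  have hpow : ‖(2 * Real.pi : ℂ) ^ (-x : ℂ)‖ = (2 * Real.pi) ^ (-x) := by
    rw [← ofReal_ofNat, ← ofReal_mul, norm_cpow_eq_rpow_re_of_pos Real.two_pi_pos, neg_re,
      ofReal_re]
  have hGamma : ‖Gamma (x : ℂ)‖ = Real.Gamma x := by
    rw [Gamma_ofReal, norm_real,
      Real.norm_of_nonneg (Real.Gamma_pos_of_pos (one_pos.trans hx)).le]
  have hphase : ‖cexp (Real.pi * I * x / 2)‖ = 1 ∧ ‖cexp (-Real.pi * I * x / 2)‖ = 1 := by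
    constructor <;> simp [Complex.norm_exp]
  rw [expZeta_one_sub a hne, norm_mul, norm_mul, hpow, hGamma]
  gcongr
  simpa only [norm_neg, norm_mul, hphase.1, hphase.2, one_mul, sub_neg_eq_add] using
    abs_norm_sub_norm_le (cexp (Real.pi * I * x / 2) * hurwitzZeta a x)
      (-(cexp (-Real.pi * I * x / 2) * hurwitzZeta (-a) x))

theorem mul_abs_one_div_rpow_sub_le_norm_expZeta_one_sub (ha : a ∈ Ioo 0 1) (hx : 1 ≤ x) :
    (2 * Real.pi) ^ (-x) * Real.Gamma x * |1 / a ^ x - 1 / (1 - a) ^ x| ≤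
      ‖expZeta (a : UnitAddCircle) (1 - x)‖ := by
  have ha0 : 0 < a := ha.1
  have ha1 : 0 < 1 - a := sub_pos.mpr ha.2
  have hx0 : 0 < x := one_pos.trans_le hx
  have hGamma : ContinuousAt Real.Gamma x :=
    (Real.differentiableAt_Gamma fun m ↦ by linarith [(m.cast_nonneg : (0 : ℝ) ≤ m)]).continuousAt
  have hleft : ContinuousAt (fun y : ℝ ↦
      (2 * Real.pi) ^ (-y) * Real.Gamma y * |1 / a ^ y - 1 / (1 - a) ^ y|) x := by
    fun_prop (disch := positivity)
  have hright : ContinuousAt (fun y : ℝ ↦ ‖expZeta (a : UnitAddCircle) (1 - y)‖) x := by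
    have hne : (1 : ℂ) - x ≠ 1 := by simpa using hx0.ne'
    exact (ContinuousAt.comp (f := fun y : ℝ ↦ (1 : ℂ) - y)
      (differentiableAt_expZeta _ _ (.inl hne)).continuousAt (by fun_prop)).norm
  have hclosure : x ∈ closure (Ioi 1) := by rwa [closure_Ioi]
  refine hleft.continuousWithinAt.closure_le hclosure hright.continuousWithinAt fun y hy ↦ ?_
  have hy0 : 0 < y := one_pos.trans hy
  calc (2 * Real.pi) ^ (-y) * Real.Gamma y * |1 / a ^ y - 1 / (1 - a) ^ y|
      ≤ (2 * Real.pi) ^ (-y) * Real.Gamma y *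
          |‖hurwitzZeta (a : UnitAddCircle) y‖ - ‖hurwitzZeta (-a : UnitAddCircle) y‖| :=
        mul_le_mul_of_nonneg_left (abs_one_div_rpow_sub_le_abs_norm_hurwitzZeta_sub ha hy)
          (by positivity)
    _ ≤ ‖expZeta (a : UnitAddCircle) (1 - y)‖ :=
        mul_abs_norm_hurwitzZeta_sub_le_norm_expZeta_one_sub a hy

theorem expZeta_ne_zero_of_nonpos (ha : a ∈ Ioo 0 1) (hhalf : a ≠ 1 / 2) {σ : ℝ} (hσ : σ ≤ 0) :
    expZeta (a : UnitAddCircle) σ ≠ 0 := by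
  have ha1 : 0 < 1 - a := sub_pos.mpr ha.2
  have hx : 1 ≤ 1 - σ := by linarith
  have hpow : a ^ (1 - σ) ≠ (1 - a) ^ (1 - σ) := fun h ↦ hhalf <| by
    linarith [(Real.rpow_left_inj ha.1.le ha1.le (by linarith)).mp h]
  have hpos : 0 < (2 * Real.pi) ^ (-(1 - σ)) * Real.Gamma (1 - σ) *
      |1 / a ^ (1 - σ) - 1 / (1 - a) ^ (1 - σ)| :=
    mul_pos (mul_pos (by positivity) (Real.Gamma_pos_of_pos (by linarith)))
      (abs_pos.mpr (sub_ne_zero.mpr fun h ↦ hpow (by simpa using h)))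
  have hbound := mul_abs_one_div_rpow_sub_le_norm_expZeta_one_sub ha hx
  rw [ofReal_sub, ofReal_one, sub_sub_cancel] at hbound
  exact norm_pos_iff.mp (hpos.trans_le hbound)

end NegativeAxis

theorem sin_two_pi_mul_ne_zero {a : ℝ} (ha : a ∈ Ioo 0 1) (hhalf : a ≠ 1 / 2) :
    Real.sin (2 * Real.pi * a) ≠ 0 := by
  rw [Real.sin_ne_zero_iff]
  intro n hn
  have hna : (n : ℝ) = 2 * a := mul_right_cancel₀ Real.pi_ne_zero (by linarith)
  have hn0 : 0 < n := by exact_mod_cast (by linarith [ha.1] : (0 : ℝ) < n)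
  have hn2 : n < 2 := by exact_mod_cast (by linarith [ha.2] : (n : ℝ) < 2)
  obtain rfl : n = 1 := by lia
  exact hhalf (by push_cast at hna; linarith)

/-- For `0 < a < 1/2` or `1/2 < a < 1`, the (analytically continued)
periodic zeta function `Li_s(e^{2πia})` does not vanish at any real point. -/
theorem expZeta_ne_zero_of_real (a : ℝ)
    (ha : (0 < a ∧ a < 1 / 2) ∨ (1 / 2 < a ∧ a < 1)) (σ : ℝ) :
    expZeta (a : UnitAddCircle) (σ : ℂ) ≠ 0 := by
  have hmem : a ∈ Ioo 0 1 := by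
    rcases ha with ⟨h0, h1⟩ | ⟨h0, h1⟩ <;> constructor <;> linarith
  have hhalf : a ≠ 1 / 2 := ha.elim (fun h ↦ h.2.ne) fun h ↦ h.1.ne'
  rcases le_or_gt σ 0 with hσ | hσ
  · exact expZeta_ne_zero_of_nonpos hmem hhalf hσ
  · intro hzero
    have him := sin_mul_im_expZeta_pos (sin_two_pi_mul_ne_zero hmem hhalf) hσ
    simp [hzero] at him
end

section
/- Let 0 < a ≤ 1/2. Then the following are equivalent: (i) 1/4 ≤ a ≤ 1/2; (ii) for every real σ ≠ 1, Z(σ,a) = 0 if and only if σ is a non-positive even integer (σ ∈ {0, −2, −4, …}), and each of these zeros is simple (the derivative of s ↦ Z(s,a) is nonzero there). -/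
open HurwitzZeta Complex

/-- `Z(s,a) = ζ(s,a) + ζ(s,1−a)`. -/
noncomputable def Zf (a : ℝ) : ℂ → ℂ :=
  fun s => hurwitzZeta a s + hurwitzZeta (1 - a : ℝ) s

/-!
`Z(s,a)` is twice the even Hurwitz zeta function, so the functional equation writes `Z(1 - s, a)`,
for `Re s > 0`, as a nowhere vanishing factor times `cos (π s / 2) * ∑ cos (2πna) / n ^ s`. The
cosine accounts for simple zeros at exactly the required points, hence the condition on the zeros
says that the analytic continuation `F(s)` of the cosine series has no zero on `(0, ∞)`.

For `s > 0` and `a ∉ ℤ`, summing `∑ cos (nθ) exp (-nt)` in closed form gives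
`Γ(s) F(s) = ∫₀^∞ t ^ (s - 1) (cos θ - exp (-t)) / (2 (cosh t - cos θ)) dt` with `θ = 2πa`. If
`cos θ ≤ 0`, the integrand is negative. If `cos θ > 0`, then `F(0) = -1/2 < 0`, whereas
`F(s) → cos θ > 0` as `s → ∞`, so `F` vanishes somewhere on `(0, ∞)`. For `a ∈ ℤ`,
`cos θ = 1` and `Z(0,a) = -1`, so `0` is not a zero.
-/

open Filter Topology MeasureTheory Set Asymptotics

section Mellin

lemma ofReal_cpow_sub_one_smul_ofReal {t : ℝ} (ht : 0 ≤ t) (x y : ℝ) :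
    (t : ℂ) ^ ((x : ℂ) - 1) • (y : ℂ) = ((t ^ (x - 1) * y : ℝ) : ℂ) := by
  rw [smul_eq_mul, ofReal_mul, ofReal_cpow ht, ofReal_sub, ofReal_one]

lemma mellin_ofReal (f : ℝ → ℝ) (x : ℝ) :
    mellin (fun t ↦ (f t : ℂ)) x = ((∫ t in Ioi (0 : ℝ), t ^ (x - 1) * f t : ℝ) : ℂ) := by
  rw [mellin, ← integral_complex_ofReal]
  exact setIntegral_congr_fun measurableSet_Ioi fun t ht ↦
    ofReal_cpow_sub_one_smul_ofReal (le_of_lt ht) x (f t)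

lemma integrableOn_rpow_mul_of_mellinConvergent {f : ℝ → ℝ} {x : ℝ}
    (hf : MellinConvergent (fun t ↦ (f t : ℂ)) x) :
    IntegrableOn (fun t ↦ t ^ (x - 1) * f t) (Ioi 0) := by
  refine IntegrableOn.congr_fun hf.re (fun t ht ↦ ?_) measurableSet_Ioi
  simp only [ofReal_cpow_sub_one_smul_ofReal (le_of_lt ht), RCLike.re_to_complex, ofReal_re]

lemma mellin_ofReal_ne_zero_of_neg {f : ℝ → ℝ} {x : ℝ}
    (hf : MellinConvergent (fun t ↦ (f t : ℂ)) x) (hneg : ∀ t, 0 < t → f t < 0) :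
    mellin (fun t ↦ (f t : ℂ)) x ≠ 0 := by
  have hpos : ∀ t ∈ Ioi (0 : ℝ), 0 < -(t ^ (x - 1) * f t) := fun t ht ↦
    neg_pos.mpr (mul_neg_of_pos_of_neg (Real.rpow_pos_of_pos ht _) (hneg t ht))
  have hsupport : Function.support (fun t ↦ -(t ^ (x - 1) * f t)) ∩ Ioi 0 = Ioi 0 :=
    inter_eq_right.mpr fun t ht ↦ (hpos t ht).ne'
  have hint : 0 < ∫ t in Ioi (0 : ℝ), -(t ^ (x - 1) * f t) := by
    rw [setIntegral_pos_iff_support_of_nonneg_ae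
      ((ae_restrict_mem measurableSet_Ioi).mono fun t ht ↦ (hpos t ht).le)
      (integrableOn_rpow_mul_of_mellinConvergent hf).neg, hsupport]
    simp
  rw [integral_neg, neg_pos] at hint
  rw [mellin_ofReal, ofReal_ne_zero]
  exact hint.ne

end Mellin

section Kernel

/-- The closed form of `∑_{n ≥ 1} cos (n θ) exp (-n t)` for `t > 0`, whose Mellin transform is `Γ`
times the cosine zeta function. It is extended by the same formula to all real `t`, and is
continuous unless `cos θ = 1`. -/
noncomputable def cosExpKernel (θ t : ℝ) : ℝ :=
  (Real.cos θ - Real.exp (-t)) / (2 * (Real.cosh t - Real.cos θ))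

lemma re_mul_inv_one_sub (z : ℂ) :
    (z * (1 - z)⁻¹).re = (z.re - normSq z) / (1 - 2 * z.re + normSq z) := by
  have hden : normSq (1 - z) = 1 - 2 * z.re + normSq z := by
    simp only [normSq_apply, sub_re, sub_im, one_re, one_im]
    ring
  rw [mul_re, inv_re, inv_im, hden, mul_div_assoc', mul_div_assoc', ← sub_div, normSq_apply]
  simp only [sub_re, sub_im, one_re, one_im]
  ring

lemma cosExpKernel_eq_re (θ t : ℝ) :
    cosExpKernel θ t = (cexp (θ * I - t) * (1 - cexp (θ * I - t))⁻¹).re := by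
  have hre : (cexp (θ * I - t)).re = Real.exp (-t) * Real.cos θ := by simp [exp_re]
  have hnorm : normSq (cexp (θ * I - t)) = Real.exp (-t) ^ 2 := by
    simp [normSq_eq_norm_sq, norm_exp]
  have hexp : Real.exp (-t) * Real.exp t = 1 := by simp [← Real.exp_add]
  rw [re_mul_inv_one_sub, hre, hnorm, cosExpKernel, Real.cosh_eq,
    ← mul_div_mul_left _ _ (Real.exp_ne_zero (-t))]
  congr 1
  · ring
  · linear_combination hexp

lemma hasSum_cosExpKernel (θ : ℝ) {t : ℝ} (ht : 0 < t) :
    HasSum (fun n : ℕ ↦ Real.cos (θ * (n + 1)) * Real.exp (-(n + 1) * t)) (cosExpKernel θ t) := by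
  have hnorm : ‖cexp (θ * I - t)‖ < 1 := by simpa [norm_exp] using ht
  rw [cosExpKernel_eq_re]
  refine (hasSum_re ((hasSum_geometric_of_norm_lt_one hnorm).mul_left _)).congr_fun fun n ↦ ?_
  have hpow : cexp (θ * I - t) * cexp (θ * I - t) ^ n =
      Real.exp (-(n + 1) * t) * cexp ((θ * (n + 1) : ℝ) * I) := by
    rw [← pow_succ', ← Complex.exp_nat_mul, ofReal_exp, ← Complex.exp_add]
    push_cast
    ring_nf
  rw [hpow, re_ofReal_mul, exp_ofReal_mul_I_re, mul_comm]

variable {θ : ℝ}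

lemma continuous_cosExpKernel (hθ : Real.cos θ ≠ 1) : Continuous (cosExpKernel θ) := by
  refine Continuous.div (by fun_prop) (by fun_prop) fun t ↦ ?_
  have := (Real.cos_le_one θ).lt_of_ne hθ
  linarith [Real.one_le_cosh t]

lemma cosExpKernel_lt_zero (hθ : Real.cos θ ≤ 0) (t : ℝ) : cosExpKernel θ t < 0 :=
  div_neg_of_neg_of_pos (by linarith [Real.exp_pos (-t)]) (by linarith [Real.one_le_cosh t])

lemma isBigO_atTop_cosExpKernel (θ : ℝ) :
    cosExpKernel θ =O[atTop] fun t ↦ Real.exp (-1 * t) := by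
  refine IsBigO.of_bound 4 ?_
  filter_upwards [eventually_ge_atTop 0, Real.tendsto_exp_atTop.eventually_ge_atTop 4]
    with t ht hexp
  have hden : Real.exp t / 2 ≤ 2 * (Real.cosh t - Real.cos θ) := by
    rw [Real.cosh_eq]
    linarith [Real.cos_le_one θ, Real.exp_pos (-t)]
  have hnum : |Real.cos θ - Real.exp (-t)| ≤ 2 := by
    have : Real.exp (-t) ≤ 1 := Real.exp_le_one_iff.mpr (by linarith)
    rw [abs_le]
    constructor <;> linarith [Real.cos_le_one θ, Real.neg_one_le_cos θ, Real.exp_pos (-t)]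
  calc ‖cosExpKernel θ t‖
      = |Real.cos θ - Real.exp (-t)| / (2 * (Real.cosh t - Real.cos θ)) := by
        rw [cosExpKernel, Real.norm_eq_abs, abs_div,
          abs_of_pos (a := 2 * _) (by linarith [Real.exp_pos t])]
    _ ≤ 2 / (Real.exp t / 2) := by gcongr
    _ = 4 * ‖Real.exp (-1 * t)‖ := by
        rw [Real.norm_eq_abs, Real.abs_exp, neg_one_mul, Real.exp_neg]
        ring

lemma isBigO_nhdsGT_zero_cosExpKernel (hθ : Real.cos θ ≠ 1) :
    cosExpKernel θ =O[𝓝[>] 0] fun t ↦ t ^ (-0 : ℝ) := by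
  simpa using ((continuous_cosExpKernel hθ).tendsto 0).isBigO_one ℝ |>.mono nhdsWithin_le_nhds

lemma locallyIntegrableOn_ofReal_cosExpKernel (hθ : Real.cos θ ≠ 1) :
    LocallyIntegrableOn (fun t ↦ (cosExpKernel θ t : ℂ)) (Ioi 0) :=
  (continuous_ofReal.comp (continuous_cosExpKernel hθ)).locallyIntegrable.locallyIntegrableOn _

lemma mellinConvergent_cosExpKernel (hθ : Real.cos θ ≠ 1) {s : ℂ} (hs : 0 < s.re) :
    MellinConvergent (fun t ↦ (cosExpKernel θ t : ℂ)) s :=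
  mellinConvergent_of_isBigO_rpow_exp one_pos (locallyIntegrableOn_ofReal_cosExpKernel hθ)
    (isBigO_ofReal_left.mpr (isBigO_atTop_cosExpKernel θ))
    (isBigO_ofReal_left.mpr (isBigO_nhdsGT_zero_cosExpKernel hθ)) hs

lemma differentiableAt_mellin_cosExpKernel (hθ : Real.cos θ ≠ 1) {s : ℂ} (hs : 0 < s.re) :
    DifferentiableAt ℂ (mellin fun t ↦ (cosExpKernel θ t : ℂ)) s :=
  mellin_differentiableAt_of_isBigO_rpow_exp one_pos (locallyIntegrableOn_ofReal_cosExpKernel hθ)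
    (isBigO_ofReal_left.mpr (isBigO_atTop_cosExpKernel θ))
    (isBigO_ofReal_left.mpr (isBigO_nhdsGT_zero_cosExpKernel hθ)) hs

end Kernel

section CosZeta

lemma cos_two_pi_mul_eq_one_iff {a : ℝ} :
    Real.cos (2 * Real.pi * a) = 1 ↔ (a : UnitAddCircle) = 0 := by
  rw [Real.cos_eq_one_iff, AddCircle.coe_eq_zero_iff]
  refine exists_congr fun n ↦ ?_
  rw [mul_comm, mul_right_inj' Real.two_pi_pos.ne', zsmul_one]

lemma ne_neg_natCast_of_re_pos {s : ℂ} (hs : 0 < s.re) (n : ℕ) : s ≠ -n := by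
  rintro rfl
  simp only [neg_re, natCast_re, Left.neg_pos_iff] at hs
  exact hs.not_ge n.cast_nonneg

lemma hasSum_nat_succ_cosZeta (a : ℝ) {s : ℂ} (hs : 1 < s.re) :
    HasSum (fun n : ℕ ↦ (Real.cos (2 * Real.pi * a * (n + 1)) : ℂ) / ((n + 1 : ℝ) : ℂ) ^ s)
      (cosZeta a s) := by
  have h := (hasSum_nat_add_iff' 1).mpr (hasSum_nat_cosZeta a hs)
  simpa only [Finset.range_one, Finset.sum_singleton, Nat.cast_zero,
    zero_cpow (ne_zero_of_re_pos (one_pos.trans hs)), div_zero, sub_zero, Nat.cast_add,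
    Nat.cast_one, ofReal_add, ofReal_natCast, ofReal_one] using h

lemma summable_abs_cos_div_rpow (θ : ℝ) {x : ℝ} (hx : 1 < x) :
    Summable fun n : ℕ ↦ |Real.cos (θ * (n + 1))| / (n + 1 : ℝ) ^ x := by
  have hsum : Summable fun n : ℕ ↦ 1 / (n + 1 : ℝ) ^ x := by
    simpa only [Nat.cast_add, Nat.cast_one] using
      (summable_nat_add_iff 1).mpr (Real.summable_one_div_nat_rpow.mpr hx)
  refine hsum.of_nonneg_of_le (fun n ↦ by positivity) fun n ↦ ?_
  gcongr
  exact Real.abs_cos_le_one _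

lemma mellin_cosExpKernel_of_one_lt_re (a : ℝ) {s : ℂ} (hs : 1 < s.re) :
    mellin (fun t ↦ (cosExpKernel (2 * Real.pi * a) t : ℂ)) s = Gamma s * cosZeta a s := by
  have hmellin := hasSum_mellin (s := s) (p := fun n : ℕ ↦ (n + 1 : ℝ))
    (a := fun n : ℕ ↦ (Real.cos (2 * Real.pi * a * (n + 1)) : ℂ))
    (fun n ↦ Or.inr n.cast_add_one_pos) (one_pos.trans hs)
    (fun t ht ↦ by
      simpa only [ofReal_mul] using hasSum_ofReal.mpr (hasSum_cosExpKernel (2 * Real.pi * a) ht))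
    (by simpa only [norm_real, Real.norm_eq_abs] using summable_abs_cos_div_rpow _ hs)
  simp only [mul_div_assoc] at hmellin
  exact hmellin.unique ((hasSum_nat_succ_cosZeta a hs).mul_left (Gamma s))

variable {a : ℝ}

theorem mellin_cosExpKernel (ha : (a : UnitAddCircle) ≠ 0) {s : ℂ} (hs : 0 < s.re) :
    mellin (fun t ↦ (cosExpKernel (2 * Real.pi * a) t : ℂ)) s = Gamma s * cosZeta a s := by
  have hcos : Real.cos (2 * Real.pi * a) ≠ 1 := cos_two_pi_mul_eq_one_iff.not.mpr ha
  have hopen (b : ℝ) : IsOpen {s : ℂ | b < s.re} := isOpen_lt continuous_const continuous_re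
  have hmellin : AnalyticOnNhd ℂ (mellin fun t ↦ (cosExpKernel (2 * Real.pi * a) t : ℂ))
      {s | 0 < s.re} := DifferentiableOn.analyticOnNhd
    (fun z hz ↦ (differentiableAt_mellin_cosExpKernel hcos hz).differentiableWithinAt) (hopen 0)
  have hzeta : AnalyticOnNhd ℂ (fun s ↦ Gamma s * cosZeta a s) {s | 0 < s.re} :=
    DifferentiableOn.analyticOnNhd (fun z hz ↦
      ((differentiableAt_Gamma z (ne_neg_natCast_of_re_pos hz)).mul
        (differentiable_cosZeta_of_ne_zero ha z)).differentiableWithinAt) (hopen 0)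
  refine hmellin.eqOn_of_preconnected_of_eventuallyEq hzeta
    (convex_halfSpace_re_gt 0).isPreconnected (z₀ := 2) (by simp) ?_ hs
  filter_upwards [(hopen 1).mem_nhds (show (1 : ℝ) < (2 : ℂ).re by simp)] with z hz
  exact mellin_cosExpKernel_of_one_lt_re a hz

lemma im_cosZeta_ofReal (ha : (a : UnitAddCircle) ≠ 0) {x : ℝ} (hx : 0 < x) :
    (cosZeta a x).im = 0 := by
  have h := congrArg im (mellin_cosExpKernel ha (s := x) (by simpa using hx))
  rw [mellin_ofReal, Gamma_ofReal, im_ofReal_mul, ofReal_im, eq_comm, mul_eq_zero] at h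
  exact h.resolve_left (Real.Gamma_pos_of_pos hx).ne'

lemma cosZeta_ofReal_ne_zero (ha : Real.cos (2 * Real.pi * a) ≤ 0) {x : ℝ} (hx : 0 < x) :
    cosZeta a x ≠ 0 := by
  have hcos : Real.cos (2 * Real.pi * a) ≠ 1 := by linarith
  have hre : 0 < (x : ℂ).re := by simpa using hx
  refine right_ne_zero_of_mul (a := Gamma x) ?_
  rw [← mellin_cosExpKernel (cos_two_pi_mul_eq_one_iff.not.mp hcos) hre]
  exact mellin_ofReal_ne_zero_of_neg (mellinConvergent_cosExpKernel hcos hre)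
    fun t _ ↦ cosExpKernel_lt_zero ha t

lemma tendsto_cosZeta_ofReal_atTop (a : ℝ) :
    Tendsto (fun x : ℝ ↦ cosZeta a x) atTop (𝓝 (Real.cos (2 * Real.pi * a))) := by
  have habs : LSeries.abscissaOfAbsConv (fun n : ℕ ↦ (Real.cos (2 * Real.pi * a * n) : ℂ)) < ⊤ :=
    (LSeriesHasSum_cos a (s := 2) (by simp)).LSeriesSummable.abscissaOfAbsConv_le.trans_lt
      (EReal.coe_lt_top _)
  have hlim := LSeries.tendsto_atTop habs
  rw [Nat.cast_one, mul_one] at hlim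
  refine hlim.congr' ?_
  filter_upwards [eventually_gt_atTop 1] with x hx
  exact (LSeriesHasSum_cos a (s := x) (by simpa using hx)).LSeries_eq

lemma exists_cosZeta_ofReal_eq_zero (ha : (a : UnitAddCircle) ≠ 0)
    (hcos : 0 < Real.cos (2 * Real.pi * a)) : ∃ x : ℝ, 0 < x ∧ cosZeta a x = 0 := by
  have hcont : Continuous fun x : ℝ ↦ (cosZeta a x).re :=
    continuous_re.comp ((differentiable_cosZeta_of_ne_zero ha).continuous.comp continuous_ofReal)
  have hlim : Tendsto (fun x : ℝ ↦ (cosZeta a x).re) atTop (𝓝 (Real.cos (2 * Real.pi * a))) :=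
    (continuous_re.tendsto (Real.cos (2 * Real.pi * a) : ℂ)).comp (tendsto_cosZeta_ofReal_atTop a)
  have hzero : (cosZeta a (0 : ℝ)).re < 0 := by
    rw [ofReal_zero, cosZeta_apply_zero]
    norm_num
  obtain ⟨y, hy, hy₀⟩ := ((hlim.eventually_const_lt hcos).and (eventually_gt_atTop 0)).exists
  obtain ⟨x, hx, hx₀⟩ := intermediate_value_Ioo hy₀.le hcont.continuousOn ⟨hzero, hy⟩
  exact ⟨x, hx.1, Complex.ext hx₀ (im_cosZeta_ofReal ha hx.1)⟩

theorem forall_cosZeta_ofReal_ne_zero_iff (ha : (a : UnitAddCircle) ≠ 0) :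
    (∀ x : ℝ, 0 < x → cosZeta a x ≠ 0) ↔ Real.cos (2 * Real.pi * a) ≤ 0 := by
  refine ⟨fun h ↦ ?_, fun h x hx ↦ cosZeta_ofReal_ne_zero h hx⟩
  by_contra! hcos
  obtain ⟨x, hx, hx₀⟩ := exists_cosZeta_ofReal_eq_zero ha hcos
  exact h x hx hx₀

end CosZeta

section FunctionalEquation

lemma Gammaℂ_ne_zero_of_re_pos {s : ℂ} (hs : 0 < s.re) : Gammaℂ s ≠ 0 := by
  rw [← Gammaℝ_mul_Gammaℝ_add_one]
  exact mul_ne_zero (Gammaℝ_ne_zero_of_re_pos hs)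
    (Gammaℝ_ne_zero_of_re_pos (by simpa using hs.trans (lt_add_one _)))

lemma differentiableAt_Gammaℂ_of_re_pos {s : ℂ} (hs : 0 < s.re) : DifferentiableAt ℂ Gammaℂ s := by
  simpa using (differentiable_Gammaℂ_inv s).fun_inv (inv_ne_zero (Gammaℂ_ne_zero_of_re_pos hs))

lemma cos_pi_mul_div_two_eq_zero_iff {s : ℂ} (hs : 0 < s.re) :
    cos (Real.pi * s / 2) = 0 ↔ ∃ n : ℕ, s = 2 * n + 1 := by
  have hpi : (Real.pi : ℂ) ≠ 0 := ofReal_ne_zero.mpr Real.pi_ne_zero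
  have hcancel (k : ℤ) : Real.pi * s / 2 = (2 * k + 1) * Real.pi / 2 ↔ s = 2 * k + 1 := by
    rw [div_left_inj' two_ne_zero, mul_comm, mul_left_inj' hpi]
  simp_rw [cos_eq_zero_iff, hcancel]
  constructor
  · rintro ⟨k, rfl⟩
    have hk : 0 < 2 * k + 1 := by
      have : (0 : ℝ) < 2 * k + 1 := by simpa using hs
      exact_mod_cast this
    lift k to ℕ using by lia
    exact ⟨k, rfl⟩
  · rintro ⟨n, rfl⟩
    exact ⟨n, rfl⟩

variable {a : UnitAddCircle} {s : ℂ}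

lemma hurwitzZetaEven_one_sub_eq_Gammaℂ_mul (ha : a ≠ 0) (hs : 0 < s.re) :
    hurwitzZetaEven a (1 - s) = Gammaℂ s * cosZeta a s * cos (Real.pi * s / 2) := by
  rw [hurwitzZetaEven_one_sub a (ne_neg_natCast_of_re_pos hs) (Or.inl ha), ← Gammaℂ_def]
  ring

lemma hurwitzZetaEven_one_sub_eq_zero_iff (ha : a ≠ 0) (hs : 0 < s.re) :
    hurwitzZetaEven a (1 - s) = 0 ↔ cosZeta a s = 0 ∨ cos (Real.pi * s / 2) = 0 := by
  simp [hurwitzZetaEven_one_sub_eq_Gammaℂ_mul ha hs, Gammaℂ_ne_zero_of_re_pos hs]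

lemma deriv_hurwitzZetaEven_one_sub (ha : a ≠ 0) (hs : 0 < s.re)
    (hcos : cos (Real.pi * s / 2) = 0) :
    deriv (hurwitzZetaEven a) (1 - s) =
      Gammaℂ s * cosZeta a s * (sin (Real.pi * s / 2) * (Real.pi / 2)) := by
  have heq : (fun z ↦ hurwitzZetaEven a (1 - z)) =ᶠ[𝓝 s]
      fun z ↦ Gammaℂ z * cosZeta a z * cos (Real.pi * z / 2) := by
    filter_upwards [(isOpen_lt continuous_const continuous_re).mem_nhds hs] with z hz
    exact hurwitzZetaEven_one_sub_eq_Gammaℂ_mul ha hz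
  have hfactor : DifferentiableAt ℂ (fun z ↦ Gammaℂ z * cosZeta a z) s :=
    (differentiableAt_Gammaℂ_of_re_pos hs).mul (differentiable_cosZeta_of_ne_zero ha s)
  have hlin : HasDerivAt (fun z : ℂ ↦ Real.pi * z / 2) (Real.pi / 2) s := by
    simpa using ((hasDerivAt_id s).const_mul (Real.pi : ℂ)).div_const 2
  rw [← neg_inj, ← deriv_comp_const_sub, heq.deriv_eq,
    (hfactor.hasDerivAt.fun_mul hlin.ccos).deriv, hcos]
  ring

lemma deriv_hurwitzZetaEven_one_sub_eq_zero_iff (ha : a ≠ 0) (hs : 0 < s.re)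
    (hcos : cos (Real.pi * s / 2) = 0) :
    deriv (hurwitzZetaEven a) (1 - s) = 0 ↔ cosZeta a s = 0 := by
  have hsin : sin (Real.pi * s / 2) ≠ 0 := fun h ↦ by
    simpa [h, hcos] using sin_sq_add_cos_sq (Real.pi * s / 2)
  simp [deriv_hurwitzZetaEven_one_sub ha hs hcos, Gammaℂ_ne_zero_of_re_pos hs, hsin]

end FunctionalEquation

section RealZeros

lemma hurwitzZetaEven_ofReal_ne_zero (a : ℝ) {x : ℝ} (hx : 1 < x) : hurwitzZetaEven a x ≠ 0 := by
  have hsum : HasSum (fun n : ℤ ↦ 1 / |n + a| ^ x / 2) (hurwitzZetaEven a x).re := by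
    refine (hasSum_re (hasSum_int_hurwitzZetaEven a (s := x) (by simpa using hx))).congr_fun
      fun n ↦ ?_
    rw [← ofReal_cpow (abs_nonneg _)]
    norm_cast
  have hpos : 0 < (1 - ⌊a⌋ : ℤ) + a := by
    push_cast
    linarith [Int.floor_le a]
  have hre : 0 < (hurwitzZetaEven a x).re :=
    lt_of_lt_of_le (by positivity) (le_hasSum hsum (1 - ⌊a⌋) fun n _ ↦ by positivity)
  exact fun h ↦ by simp [h] at hre

lemma Zf_eq_two_mul_hurwitzZetaEven (a : ℝ) (s : ℂ) : Zf a s = 2 * hurwitzZetaEven a s := by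
  have hneg : ((1 - a : ℝ) : UnitAddCircle) = -a := by
    rw [AddCircle.coe_sub, AddCircle.coe_period, zero_sub]
  rw [Zf, hneg, hurwitzZetaEven_eq]
  ring

lemma Zf_eq_zero_iff (a : ℝ) (s : ℂ) : Zf a s = 0 ↔ hurwitzZetaEven a s = 0 := by
  simp [Zf_eq_two_mul_hurwitzZetaEven]

lemma deriv_Zf_eq_zero_iff (a : ℝ) (s : ℂ) :
    deriv (Zf a) s = 0 ↔ deriv (hurwitzZetaEven a) s = 0 := by
  simp [funext (Zf_eq_two_mul_hurwitzZetaEven a)]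

lemma Zf_zero_ne_zero_of_coe_eq_zero {a : ℝ} (ha : (a : UnitAddCircle) = 0) : Zf a 0 ≠ 0 := by
  simp [Zf_eq_zero_iff, hurwitzZetaEven_apply_zero, ha]

lemma Zf_zero_condition_iff_cosZeta_one_sub_ne_zero {a : ℝ} (ha : (a : UnitAddCircle) ≠ 0) {σ : ℝ}
    (hσ : σ < 1) :
    ((Zf a σ = 0 ↔ ∃ n : ℕ, σ = -(2 * n)) ∧ (Zf a σ = 0 → deriv (Zf a) σ ≠ 0)) ↔
      cosZeta a (1 - σ) ≠ 0 := by
  have hre : 0 < (1 - σ : ℂ).re := by simpa using hσ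
  have hZ := hurwitzZetaEven_one_sub_eq_zero_iff ha hre
  have hderiv := deriv_hurwitzZetaEven_one_sub_eq_zero_iff ha hre
  have hcos : cos (Real.pi * (1 - σ) / 2) = 0 ↔ ∃ n : ℕ, σ = -(2 * n) := by
    rw [cos_pi_mul_div_two_eq_zero_iff hre]
    refine exists_congr fun n ↦ ?_
    rw [sub_eq_iff_eq_add, ← ofReal_inj]
    push_cast
    constructor <;> intro h <;> linear_combination -h
  rw [sub_sub_cancel, ← Zf_eq_zero_iff] at hZ
  rw [sub_sub_cancel, ← deriv_Zf_eq_zero_iff] at hderiv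
  rw [← hcos, hZ]
  -- A zero of `cosZeta a` at `1 - σ` is a further zero of `Z` or makes a trivial zero multiple.
  tauto

theorem real_zeros_Z_iff_general (a : ℝ) :
    Real.cos (2 * Real.pi * a) ≤ 0 ↔
      ∀ σ : ℝ, σ ≠ 1 →
        ((Zf a (σ : ℂ) = 0 ↔ ∃ n : ℕ, σ = -(2 * n)) ∧
         (Zf a (σ : ℂ) = 0 → deriv (Zf a) (σ : ℂ) ≠ 0)) := by
  by_cases ha : (a : UnitAddCircle) = 0
  · refine iff_of_false (by simp [cos_two_pi_mul_eq_one_iff.mpr ha]) fun h ↦ ?_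
    exact Zf_zero_ne_zero_of_coe_eq_zero ha (by simpa using (h 0 zero_ne_one).1.mpr ⟨0, by simp⟩)
  rw [← forall_cosZeta_ofReal_ne_zero_iff ha]
  constructor
  · intro h σ hσ
    rcases hσ.lt_or_gt with hlt | hgt
    · exact (Zf_zero_condition_iff_cosZeta_one_sub_ne_zero ha hlt).mpr
        (mod_cast h (1 - σ) (sub_pos.mpr hlt))
    · have hne := (Zf_eq_zero_iff a σ).not.mpr (hurwitzZetaEven_ofReal_ne_zero a hgt)
      refine ⟨iff_of_false hne ?_, fun h₀ ↦ absurd h₀ hne⟩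
      rintro ⟨n, rfl⟩
      linarith [n.cast_nonneg (α := ℝ)]
  · intro h x hx
    have hlt : 1 - x < 1 := by linarith
    simpa using (Zf_zero_condition_iff_cosZeta_one_sub_ne_zero ha hlt).mp (h _ hlt.ne)

lemma cos_two_pi_mul_nonpos_iff {a : ℝ} (ha₀ : 0 ≤ a) (ha₁ : a ≤ 1 / 2) :
    Real.cos (2 * Real.pi * a) ≤ 0 ↔ 1 / 4 ≤ a := by
  refine ⟨fun h ↦ ?_, fun h ↦ ?_⟩
  · by_contra! hlt
    refine h.not_gt (Real.cos_pos_of_mem_Ioo ?_)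
    constructor <;> nlinarith [Real.pi_pos]
  · apply Real.cos_nonpos_of_pi_div_two_le_of_le <;> nlinarith [Real.pi_pos]

end RealZeros

/-- For `0 < a ≤ 1/2`: `1/4 ≤ a ≤ 1/2` iff all real zeros (away from `s = 1`)
of `Z(·,a)` are simple and exactly the non-positive even integers. -/
theorem real_zeros_Z_iff (a : ℝ) (ha₀ : 0 < a) (ha₁ : a ≤ 1 / 2) :
    (1 / 4 ≤ a ∧ a ≤ 1 / 2) ↔
      ∀ σ : ℝ, σ ≠ 1 →
        ((Zf a (σ : ℂ) = 0 ↔ ∃ n : ℕ, σ = -(2 * n)) ∧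
         (Zf a (σ : ℂ) = 0 → deriv (Zf a) (σ : ℂ) ≠ 0)) := by
  rw [and_iff_left ha₁, ← cos_two_pi_mul_nonpos_iff ha₀.le ha₁]
  exact real_zeros_Z_iff_general a
end

section
/- For all s ∈ ℂ: Y(s,1/6) = (6^s + 3^s) · L(s,χ₋₃), O(s,1/6) = √3 (1 + 2^{1−s}) · L(s,χ₋₃), and X(s,1/6) = (6^s + 3^s + √3(1 + 2^{1−s})) · L(s,χ₋₃). -/
open HurwitzZeta Complex

/-- `Y(s,a) = ζ(s,a) − ζ(s,1−a)`. -/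
noncomputable def Yf (a : ℝ) : ℂ → ℂ :=
  fun s => hurwitzZeta a s - hurwitzZeta (1 - a : ℝ) s

/-- `O(s,a) = −i(Li_s(e^{2πia}) − Li_s(e^{2πi(1−a)}))`. -/
noncomputable def Og (a : ℝ) : ℂ → ℂ :=
  fun s => -Complex.I * (expZeta a s - expZeta (1 - a : ℝ) s)

/-- `X(s,a) = Y(s,a) + O(s,a)`. -/
noncomputable def Xf (a : ℝ) : ℂ → ℂ :=
  fun s => Yf a s + Og a s

/-!
`Y(s, a)` and `O(s, a)` are twice the odd Hurwitz zeta function `ζ⁻(s, a)` and the sine zeta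
function `S(s, a)`, which are entire in `s`. The completed function `Λ(s, a)` of `ζ⁻(s, a)`
satisfies `∑ₖ Λ(s, (x + k) / m) = m ^ s Λ(s, x)`: for `1 < re s` split the series over `ℤ` into
residue classes mod `m`. As `Λ(1 - s, a)` is the completion of `S(s, a)`, the function `S` obeys the
same relation with factor `m ^ (1 - s)`. For an odd function of `a`, the case `m = 2`, `x = 2/3`
expresses the value at `1/6` through the value at `1/3`, and the values there are multiples of
`L(s, χ₋₃)`; for `S` this is because `χ₋₃` is, up to the factor `-i√3`, its own Fourier transform on
`ℤ/3`.
-/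

section DistributionRelation

theorem eq_of_eq_on_one_lt_re {f g : ℂ → ℂ} (hf : Differentiable ℂ f) (hg : Differentiable ℂ g)
    (h : ∀ s : ℂ, 1 < s.re → f s = g s) : f = g :=
  (analyticOnNhd_univ_iff_differentiable.mpr hf).eq_of_eventuallyEq
    (analyticOnNhd_univ_iff_differentiable.mpr hg) (z₀ := 2) <|
      Filter.eventually_of_mem
        ((isOpen_lt continuous_const continuous_re).mem_nhds <| by norm_num) h

theorem sign_div_abs_cpow_div {c : ℝ} (hc : 0 < c) (y : ℝ) (s : ℂ) :
    (SignType.sign (y / c) : ℂ) / (|y / c| : ℝ) ^ s =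
      c ^ s * ((SignType.sign y : ℂ) / (|y| : ℝ) ^ s) := by
  have hsign : SignType.sign (y / c) = SignType.sign y := by
    rw [div_eq_mul_inv, sign_mul, sign_pos (inv_pos.mpr hc), mul_one]
  have habs : ((|y| : ℝ) : ℂ) ^ s = (|y / c| : ℝ) ^ s * c ^ s := by
    rw [← mul_cpow_ofReal_nonneg (abs_nonneg _) hc.le, ← ofReal_mul,
      abs_div, abs_of_pos hc, div_mul_cancel₀ _ hc.ne']
  have hcpow : (c : ℂ) ^ s ≠ 0 := by simp [cpow_eq_zero_iff, hc.ne']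
  rw [hsign, habs, mul_div_left_comm, div_mul_cancel_right₀ hcpow, div_eq_mul_inv]

variable (m : ℕ) [NeZero m] (x : ℝ)

theorem sum_completedHurwitzZetaOdd_add_div_of_one_lt_re {s : ℂ} (hs : 1 < s.re) :
    ∑ k : Fin m, completedHurwitzZetaOdd ((x + k) / m : ℝ) s =
      m ^ s * completedHurwitzZetaOdd x s := by
  have hm : (0 : ℝ) < m := Nat.cast_pos.mpr (NeZero.pos m)
  have hclass (k : Fin m) := hasSum_int_completedHurwitzZetaOdd ((x + k) / m) hs
  have hall := (Equiv.prodComm _ _).hasSum_iff.mpr <| (Int.divModEquiv m).symm.hasSum_iff.mpr <|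
    (hasSum_int_completedHurwitzZetaOdd x hs).mul_left ((m : ℂ) ^ s)
  refine (hasSum_fintype _).unique (hall.prod_fiberwise fun k ↦ (hclass k).congr_fun fun n ↦ ?_)
  have hscale : (n + (x + k) / m : ℝ) = (((n * m + k : ℤ) : ℝ) + x) / m := by
    field_simp
    push_cast
    ring
  have hterm := sign_div_abs_cpow_div hm (((n * m + k : ℤ) : ℝ) + x) s
  simp only [Function.comp_apply, Equiv.prodComm_apply, Prod.swap_prod_mk,
    Int.divModEquiv_symm_apply, hscale]
  rw [ofReal_natCast] at hterm
  linear_combination -(Gammaℝ (s + 1) / 2) * hterm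

theorem sum_completedHurwitzZetaOdd_add_div (s : ℂ) :
    ∑ k : Fin m, completedHurwitzZetaOdd ((x + k) / m : ℝ) s =
      m ^ s * completedHurwitzZetaOdd x s := by
  have hm : (m : ℂ) ≠ 0 := NeZero.ne _
  refine congrFun (eq_of_eq_on_one_lt_re
    (f := fun s ↦ ∑ k : Fin m, completedHurwitzZetaOdd ((x + k) / m : ℝ) s)
    (g := fun s ↦ m ^ s * completedHurwitzZetaOdd x s) ?_ ?_
    fun s ↦ sum_completedHurwitzZetaOdd_add_div_of_one_lt_re m x) s
  · exact .fun_sum fun k _ ↦ differentiable_completedHurwitzZetaOdd _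
  · exact (differentiable_id.const_cpow (.inl hm)).mul (differentiable_completedHurwitzZetaOdd _)

theorem sum_hurwitzZetaOdd_add_div (s : ℂ) :
    ∑ k : Fin m, hurwitzZetaOdd ((x + k) / m : ℝ) s = m ^ s * hurwitzZetaOdd x s := by
  simp only [hurwitzZetaOdd, ← Finset.sum_div, sum_completedHurwitzZetaOdd_add_div, mul_div_assoc]

theorem sum_sinZeta_add_div (s : ℂ) :
    ∑ k : Fin m, sinZeta ((x + k) / m : ℝ) s = m ^ (1 - s) * sinZeta x s := by
  simp only [sinZeta, ← completedHurwitzZetaOdd_one_sub, ← Finset.sum_div,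
    sum_completedHurwitzZetaOdd_add_div, mul_div_assoc]

end DistributionRelation

theorem sixth_eq_one_add_mul_third {R : Type*} [CommRing R] {f : UnitAddCircle → R} (hf : f.Odd)
    {c : R} (hdup : ∀ x : ℝ, ∑ k : Fin 2, f ((x + k) / 2 : ℝ) = c * f x) :
    f (1 / 6 : ℝ) = (1 + c) * f (1 / 3 : ℝ) := by
  have hneg (y : ℝ) : f (1 - y : ℝ) = -f y := by
    rw [AddCircle.coe_sub, AddCircle.coe_period, zero_sub, hf]
  have hthird : f (1 / 3 : ℝ) + f (1 - 1 / 6 : ℝ) = c * f (1 - 1 / 3 : ℝ) := by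
    convert hdup (1 - 1 / 3) using 1
    norm_num [Fin.sum_univ_two]
  rw [hneg, hneg] at hthird
  linear_combination -hthird

theorem Yf_eq_two_mul_hurwitzZetaOdd (a : ℝ) (s : ℂ) : Yf a s = 2 * hurwitzZetaOdd a s := by
  rw [Yf, hurwitzZetaOdd_eq, AddCircle.coe_sub, AddCircle.coe_period, zero_sub,
    mul_div_cancel₀ _ two_ne_zero]

theorem Og_eq_two_mul_sinZeta (a : ℝ) (s : ℂ) : Og a s = 2 * sinZeta a s := by
  rw [Og, sinZeta_eq, AddCircle.coe_sub, AddCircle.coe_period, zero_sub]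
  field_simp
  simp

section ZMod

open ZMod

variable {N : ℕ} [NeZero N]

theorem sum_mul_sinZeta_toAddCircle {Φ : ZMod N → ℂ} (hΦ : Φ.Odd) (s : ℂ) :
    ∑ j, Φ j * sinZeta (toAddCircle j) s = I * LFunction (𝓕 Φ) s := by
  have hcos : ∑ j, Φ j * cosZeta (toAddCircle j) s = 0 :=
    (hΦ.mul_even fun j ↦ by rw [map_neg, cosZeta_neg]).sum_eq_zero
  rw [LFunction_dft Φ (.inl hΦ.map_zero)]
  simp only [map_neg, expZeta, cosZeta_neg, sinZeta_neg, mul_add, Finset.sum_add_distrib, hcos,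
    Finset.mul_sum]
  rw [mul_zero, zero_add]
  refine Finset.sum_congr rfl fun j _ ↦ ?_
  linear_combination (Φ j * sinZeta (toAddCircle j) s) * I_sq

theorem LFunction_const_smul (c : ℂ) (Φ : ZMod N → ℂ) (s : ℂ) :
    LFunction (c • Φ) s = c * LFunction Φ s := by
  simp only [LFunction, Pi.smul_apply, smul_eq_mul, mul_assoc, ← Finset.mul_sum, mul_left_comm _ c]

theorem stdAddChar_sub_stdAddChar_neg (j : ℤ) :
    stdAddChar (j : ZMod N) - stdAddChar (-j : ZMod N) = 2 * sin (2 * Real.pi * j / N) * I := by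
  have hexponent (z : ℂ) : 2 * Real.pi * I * z / N = 2 * Real.pi * z / N * I := by ring
  rw [← Int.cast_neg, stdAddChar_coe, stdAddChar_coe, hexponent, hexponent, two_sin,
    mul_assoc _ I I, I_mul_I, mul_neg_one, neg_sub, Int.cast_neg, mul_neg, neg_div]

end ZMod

section ModThree

open ZMod

theorem odd_of_ne_one_mod_three {χ : DirichletCharacter ℂ 3} (hχ : χ ≠ 1) : χ.Odd := by
  refine χ.even_or_odd.resolve_left fun heven ↦ hχ (MulChar.ext fun u ↦ ?_)
  have hu : (u : ZMod 3) = 1 ∨ (u : ZMod 3) = -1 := by revert u; decide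
  rw [MulChar.one_apply_coe]
  rcases hu with hu | hu
  · rw [hu, map_one]
  · rw [hu, heven]

variable {χ : DirichletCharacter ℂ 3}

theorem sum_mul_of_odd_mod_three (hχ : χ.Odd) (g : ZMod 3 → ℂ) : ∑ j, χ j * g j = g 1 - g (-1) := by
  have hsum : ∑ j : ZMod 3, χ j * g j = χ 0 * g 0 + χ 1 * g 1 + χ (-1) * g (-1) :=
    Fin.sum_univ_three _
  rw [hsum, hχ.to_fun.map_zero, map_one, hχ]
  ring

theorem eq_smul_of_odd_mod_three (hχ : χ.Odd) {Φ : ZMod 3 → ℂ} (hΦ : Φ.Odd) :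
    Φ = Φ 1 • ⇑χ := by
  funext k
  have hk : k = 0 ∨ k = 1 ∨ k = -1 := by revert k; decide
  rcases hk with rfl | rfl | rfl
  · simp [hΦ.map_zero, hχ.to_fun.map_zero]
  · simp
  · simp [hΦ 1, hχ.to_fun 1]

theorem dft_of_odd_mod_three (hχ : χ.Odd) : 𝓕 χ = (-(Real.sqrt 3 * I) : ℂ) • ⇑χ := by
  have hsin : sin (2 * Real.pi * (1 : ℤ) / (3 : ℕ)) = Real.sqrt 3 / 2 := by
    have hangle : Real.pi - 2 * Real.pi * (1 : ℤ) / (3 : ℕ) = ((Real.pi / 3 : ℝ) : ℂ) := by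
      push_cast
      ring
    rw [← sin_pi_sub, hangle, ← ofReal_sin, Real.sin_pi_div_three, ofReal_div, ofReal_ofNat]
  have hone : 𝓕 χ 1 = -(Real.sqrt 3 * I) := by
    have hexp := stdAddChar_sub_stdAddChar_neg (N := 3) 1
    rw [hsin, Int.cast_one, mul_div_cancel₀ _ two_ne_zero] at hexp
    simp_rw [dft_apply, smul_eq_mul, mul_comm (stdAddChar _), mul_one,
      sum_mul_of_odd_mod_three hχ, neg_neg]
    rw [← hexp, neg_sub]
  rw [← hone]
  exact eq_smul_of_odd_mod_three hχ (dft_odd_iff.mpr hχ.to_fun)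

theorem sum_mul_toAddCircle_of_odd_mod_three (hχ : χ.Odd) {f : UnitAddCircle → ℂ}
    (hf : f.Odd) :
    ∑ j, χ j * f (toAddCircle j) = 2 * f (1 / 3 : ℝ) := by
  have hone : toAddCircle (1 : ZMod 3) = (1 / 3 : ℝ) := by
    simpa using toAddCircle_natCast (N := 3) 1
  rw [sum_mul_of_odd_mod_three hχ (f <| toAddCircle ·), map_neg, hf, hone]
  ring

theorem two_mul_hurwitzZetaOdd_third (hχ : χ.Odd) (s : ℂ) :
    2 * hurwitzZetaOdd (1 / 3 : ℝ) s = 3 ^ s * χ.LFunction s := by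
  have hthree : (3 : ℂ) ^ s ≠ 0 := by simp [cpow_eq_zero_iff]
  rw [DirichletCharacter.LFunction, LFunction_def_odd hχ.to_fun,
    sum_mul_toAddCircle_of_odd_mod_three hχ (f := (hurwitzZetaOdd · s)) (hurwitzZetaOdd_neg · s),
    cpow_neg, Nat.cast_ofNat, mul_inv_cancel_left₀ hthree]

theorem two_mul_sinZeta_third (hχ : χ.Odd) (s : ℂ) :
    2 * sinZeta (1 / 3 : ℝ) s = Real.sqrt 3 * χ.LFunction s := by
  rw [← sum_mul_toAddCircle_of_odd_mod_three hχ (f := (sinZeta · s)) (sinZeta_neg · s),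
    sum_mul_sinZeta_toAddCircle hχ.to_fun, dft_of_odd_mod_three hχ,
    LFunction_const_smul, ← DirichletCharacter.LFunction]
  linear_combination -(Real.sqrt 3 * χ.LFunction s) * I_sq

end ModThree

/-- `Y(s,1/6) = (6^s + 3^s)·L(s,χ₋₃)`, `O(s,1/6) = √3(1 + 2^{1−s})·L(s,χ₋₃)`,
`X(s,1/6) = (6^s + 3^s + √3(1 + 2^{1−s}))·L(s,χ₋₃)`, where `χ₋₃` is the unique nontrivial
Dirichlet character mod 3. -/
theorem Y_O_X_at_sixth :
    ∀ χ : DirichletCharacter ℂ 3, χ ≠ 1 → ∀ s : ℂ,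
      Yf (1 / 6) s = ((6 : ℂ) ^ s + (3 : ℂ) ^ s) * DirichletCharacter.LFunction χ s ∧
      Og (1 / 6) s = (Real.sqrt 3 : ℂ) * (1 + (2 : ℂ) ^ (1 - s)) *
        DirichletCharacter.LFunction χ s ∧
      Xf (1 / 6) s = ((6 : ℂ) ^ s + (3 : ℂ) ^ s +
          (Real.sqrt 3 : ℂ) * (1 + (2 : ℂ) ^ (1 - s))) *
        DirichletCharacter.LFunction χ s := by
  intro χ hχ s
  have hodd := odd_of_ne_one_mod_three hχ
  have hY : Yf (1 / 6) s = ((6 : ℂ) ^ s + (3 : ℂ) ^ s) * DirichletCharacter.LFunction χ s := by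
    have hsix : (6 : ℂ) ^ s = 2 ^ s * 3 ^ s := mod_cast natCast_mul_natCast_cpow 2 3 s
    rw [Yf_eq_two_mul_hurwitzZetaOdd,
      sixth_eq_one_add_mul_third (f := (hurwitzZetaOdd · s)) (hurwitzZetaOdd_neg · s)
        (sum_hurwitzZetaOdd_add_div 2 · s), mul_left_comm, two_mul_hurwitzZetaOdd_third hodd,
      hsix, Nat.cast_ofNat]
    ring
  have hO : Og (1 / 6) s = (Real.sqrt 3 : ℂ) * (1 + (2 : ℂ) ^ (1 - s)) *
      DirichletCharacter.LFunction χ s := by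
    rw [Og_eq_two_mul_sinZeta, sixth_eq_one_add_mul_third (f := (sinZeta · s)) (sinZeta_neg · s)
      (sum_sinZeta_add_div 2 · s), mul_left_comm, two_mul_sinZeta_third hodd,
      Nat.cast_ofNat]
    ring
  refine ⟨hY, hO, ?_⟩
  rw [Xf, hY, hO]
  ring
end

section
/- Every complex zero of the function s ↦ 3^s(1 + 2^s) + √3(1 + 2^{1−s}) lies on the vertical line Re s = 1/2; that is, if s ∈ ℂ satisfies 3^s(1 + 2^s) + √3(1 + 2^{1−s}) = 0, then Re s = 1/2. (Equivalently, 6^s + 3^s + √3(1 + 2^{1−s}) = 0 implies Re s = 1/2.) In particular, |(1 + 2^{1−s})/(1 + 2^s)| < 1 whenever Re s > 1/2, = 1 whenever Re s = 1/2, and > 1 whenever Re s < 1/2. -/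
open Complex

/-!
Write `z = a ^ s`, so that `a ^ (1 - s) = a / z`. For real `a` one has
`(‖z‖ * ‖1 + z‖) ^ 2 - ‖z + a‖ ^ 2 = (‖z‖ ^ 2 - a) * (‖1 + z‖ ^ 2 + (a - 1))`,
and for `1 < a` the last factor is positive; hence `‖1 + a ^ s‖ - ‖1 + a ^ (1 - s)‖` has the sign of
`‖a ^ s‖ - √a`, that is, of `s.re - 1 / 2`. If `1 ≤ b`, then `‖b ^ s‖ - √b` never has the opposite
sign, so `b ^ s * (1 + a ^ s)` and `√b * (1 + a ^ (1 - s))` have different norms off the critical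
line.
-/

theorem norm_mul_norm_one_add_sq_sub_norm_add_ofReal_sq (a : ℝ) (z : ℂ) :
    (‖z‖ * ‖1 + z‖) ^ 2 - ‖z + a‖ ^ 2 = (‖z‖ ^ 2 - a) * (‖1 + z‖ ^ 2 + (a - 1)) := by
  simp only [mul_pow, Complex.sq_norm, normSq_apply, add_re, add_im, one_re, one_im, ofReal_re,
    ofReal_im]
  ring

section

variable {a : ℝ}

theorem norm_one_add_ofReal_div_lt_iff (ha : 1 < a) {z : ℂ} (hz : z ≠ 0) :
    ‖1 + a / z‖ < ‖1 + z‖ ↔ √a < ‖z‖ := by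
  have hz' : 0 < ‖z‖ := norm_pos_iff.2 hz
  have ha' : 0 < ‖1 + z‖ ^ 2 + (a - 1) := add_pos_of_nonneg_of_pos (sq_nonneg _) (sub_pos.2 ha)
  calc
    ‖1 + a / z‖ < ‖1 + z‖ ↔ ‖z + a‖ < ‖z‖ * ‖1 + z‖ := by
      rw [one_add_div hz, norm_div, div_lt_iff₀' hz']
    _ ↔ ‖z + a‖ ^ 2 < (‖z‖ * ‖1 + z‖) ^ 2 := (sq_lt_sq₀ (by positivity) (by positivity)).symm
    _ ↔ 0 < (‖z‖ ^ 2 - a) * (‖1 + z‖ ^ 2 + (a - 1)) := by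
      rw [← sub_pos, norm_mul_norm_one_add_sq_sub_norm_add_ofReal_sq]
    _ ↔ √a < ‖z‖ := by rw [mul_pos_iff_of_pos_right ha', sub_pos, Real.sqrt_lt' hz']

theorem norm_one_add_cpow_one_sub_lt_iff (ha : 1 < a) (s : ℂ) :
    ‖1 + (a : ℂ) ^ (1 - s)‖ < ‖1 + (a : ℂ) ^ s‖ ↔ 1 / 2 < s.re := by
  have ha₀ : 0 < a := zero_lt_one.trans ha
  have ha₀' : (a : ℂ) ≠ 0 := ofReal_ne_zero.2 ha₀.ne'
  rw [cpow_sub _ _ ha₀', cpow_one,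
    norm_one_add_ofReal_div_lt_iff ha (cpow_ne_zero_iff.2 (.inl ha₀')),
    norm_cpow_eq_rpow_re_of_pos ha₀, Real.sqrt_eq_rpow, Real.rpow_lt_rpow_left_iff ha]

theorem norm_one_add_cpow_lt_iff (ha : 1 < a) (s : ℂ) :
    ‖1 + (a : ℂ) ^ s‖ < ‖1 + (a : ℂ) ^ (1 - s)‖ ↔ s.re < 1 / 2 := by
  have h := norm_one_add_cpow_one_sub_lt_iff ha (1 - s)
  rw [sub_sub_cancel, sub_re, one_re] at h
  exact h.trans ⟨fun _ => by linarith, fun _ => by linarith⟩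

theorem norm_one_add_cpow_one_sub_eq_iff (ha : 1 < a) (s : ℂ) :
    ‖1 + (a : ℂ) ^ (1 - s)‖ = ‖1 + (a : ℂ) ^ s‖ ↔ s.re = 1 / 2 := by
  simp only [le_antisymm_iff, ← not_lt, norm_one_add_cpow_one_sub_lt_iff ha,
    norm_one_add_cpow_lt_iff ha, and_comm]

theorem re_eq_half_of_cpow_mul_add_sqrt_mul_eq_zero {b : ℝ} (ha : 1 < a) (hb : 1 ≤ b) {s : ℂ}
    (h : (b : ℂ) ^ s * (1 + (a : ℂ) ^ s) + (√b : ℂ) * (1 + (a : ℂ) ^ (1 - s)) = 0) :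
    s.re = 1 / 2 := by
  have hb₀ : 0 < b := zero_lt_one.trans_le hb
  have norm_eq : b ^ s.re * ‖1 + (a : ℂ) ^ s‖ = b ^ (1 / 2 : ℝ) * ‖1 + (a : ℂ) ^ (1 - s)‖ := by
    simpa only [norm_neg, norm_mul, norm_cpow_eq_rpow_re_of_pos hb₀, Real.sqrt_eq_rpow,
      Complex.norm_of_nonneg (Real.rpow_nonneg hb₀.le _)]
      using congrArg norm (eq_neg_of_add_eq_zero_left h)
  rcases lt_trichotomy s.re (1 / 2) with hs | hs | hs
  · have rpow_le : b ^ s.re ≤ b ^ (1 / 2 : ℝ) := Real.rpow_le_rpow_of_exponent_le hb hs.le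
    have factor_lt := (norm_one_add_cpow_lt_iff ha s).2 hs
    exact absurd norm_eq (mul_lt_mul_of_le_of_lt_of_nonneg_of_pos rpow_le factor_lt
      (norm_nonneg _) (by positivity)).ne
  · exact hs
  · have le_rpow : b ^ (1 / 2 : ℝ) ≤ b ^ s.re := Real.rpow_le_rpow_of_exponent_le hb hs.le
    have factor_lt := (norm_one_add_cpow_one_sub_lt_iff ha s).2 hs
    exact absurd norm_eq (mul_lt_mul_of_le_of_lt_of_nonneg_of_pos le_rpow factor_lt
      (norm_nonneg _) (by positivity)).ne'

end

/-- every complex zero of `s ↦ 3^s(1 + 2^s) + √3(1 + 2^{1−s})`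
(equivalently of `s ↦ 6^s + 3^s + √3(1 + 2^{1−s})`) lies on the line `Re s = 1/2`;
moreover `|1 + 2^{1−s}| < |1 + 2^s|` for `Re s > 1/2`, with equality for `Re s = 1/2`,
and the reverse strict inequality for `Re s < 1/2`. -/
theorem zeros_of_aux_factor_on_critical_line :
    (∀ s : ℂ, (3 : ℂ) ^ s * (1 + (2 : ℂ) ^ s) +
        (Real.sqrt 3 : ℂ) * (1 + (2 : ℂ) ^ (1 - s)) = 0 → s.re = 1 / 2) ∧
    (∀ s : ℂ, (6 : ℂ) ^ s + (3 : ℂ) ^ s +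
        (Real.sqrt 3 : ℂ) * (1 + (2 : ℂ) ^ (1 - s)) = 0 → s.re = 1 / 2) ∧
    (∀ s : ℂ, 1 / 2 < s.re → ‖1 + (2 : ℂ) ^ (1 - s)‖ < ‖1 + (2 : ℂ) ^ s‖) ∧
    (∀ s : ℂ, s.re = 1 / 2 → ‖1 + (2 : ℂ) ^ (1 - s)‖ = ‖1 + (2 : ℂ) ^ s‖) ∧
    (∀ s : ℂ, s.re < 1 / 2 → ‖1 + (2 : ℂ) ^ s‖ < ‖1 + (2 : ℂ) ^ (1 - s)‖) := by
  have zero_re (s : ℂ) (h : (3 : ℂ) ^ s * (1 + (2 : ℂ) ^ s) +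
      (Real.sqrt 3 : ℂ) * (1 + (2 : ℂ) ^ (1 - s)) = 0) : s.re = 1 / 2 :=
    re_eq_half_of_cpow_mul_add_sqrt_mul_eq_zero (a := 2) (b := 3) (by norm_num) (by norm_num)
      (by exact_mod_cast h)
  have six_cpow (s : ℂ) : (6 : ℂ) ^ s = (3 : ℂ) ^ s * (2 : ℂ) ^ s := by
    rw [show (6 : ℂ) = 3 * 2 by norm_num]
    exact_mod_cast natCast_mul_natCast_cpow 3 2 s
  refine ⟨zero_re, fun s h => zero_re s ?_, fun s hs => ?_, fun s hs => ?_, fun s hs => ?_⟩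
  · rwa [mul_one_add, add_comm (3 ^ s : ℂ), ← six_cpow]
  · exact_mod_cast (norm_one_add_cpow_one_sub_lt_iff one_lt_two s).2 hs
  · exact_mod_cast (norm_one_add_cpow_one_sub_eq_iff one_lt_two s).2 hs
  · exact_mod_cast (norm_one_add_cpow_lt_iff one_lt_two s).2 hs
end

section
/- For all s ∈ ℂ with s ≠ 1: P(s,1/2) = 2(2^{1−s} − 1)ζ(s), P(s,1/3) = (3^{1−s} − 1)ζ(s), P(s,1/4) = 2^{1−s}(2^{1−s} − 1)ζ(s), and P(s,1/6) = (2^{1−s} − 1)(3^{1−s} − 1)ζ(s), where ζ(s) is the Riemann zeta function. In particular, P(1,1/6) = 0. -/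
open HurwitzZeta Complex

/-- `P(s,a) = Li_s(e^{2πia}) + Li_s(e^{2πi(1−a)})`. -/
noncomputable def Pf (a : ℝ) : ℂ → ℂ :=
  fun s => expZeta a s + expZeta (1 - a : ℝ) s

/-!
Summing `e^{2πin(b+j)/N}` over `j < N` kills every `n` not divisible by `N`, which gives the
distribution relation `∑_{j<N} Li_s(e^{2πi(b+j)/N}) = N^{1-s} Li_s(e^{2πib})` for `Re s > 1`, hence
by analytic continuation for all `s`, with `s = 1` excluded if `b` is an integer. It passes to
`P(s, ·)`, which satisfies `P(s, 1-a) = P(s, a)` and `P(s, 0) = 2ζ(s)`. Taking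
`(N, b) = (2, 0), (3, 0), (2, 1/2), (2, 1/3)` yields the four values. The last
instance holds even at `s = 1`, since `1/3` is not an integer.
-/

theorem sum_pow_pow_of_isPrimitiveRoot {R : Type*} [CommRing R] [IsDomain R] {ζ : R} {N : ℕ}
    (hζ : IsPrimitiveRoot ζ N) (n : ℕ) :
    ∑ j ∈ Finset.range N, (ζ ^ n) ^ j = if N ∣ n then (N : R) else 0 := by
  split_ifs with h
  · simp [(hζ.pow_eq_one_iff_dvd n).mpr h]
  · have hζn : ζ ^ n - 1 ≠ 0 := sub_ne_zero.mpr fun h1 => h ((hζ.pow_eq_one_iff_dvd n).mp h1)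
    have hpow : (ζ ^ n) ^ N = 1 := by rw [pow_right_comm, hζ.pow_eq_one, one_pow]
    refine (mul_eq_zero.mp ?_).resolve_left hζn
    rw [mul_geom_sum, hpow, sub_self]

section Distribution

variable (N : ℕ) [NeZero N]

theorem sum_exp_add_div_mul (b : ℂ) (n : ℕ) :
    ∑ j ∈ Finset.range N, cexp (2 * Real.pi * I * ((b + j) / N) * n) =
      if N ∣ n then N * cexp (2 * Real.pi * I * b * (n / N)) else 0 := by
  have hN : (N : ℂ) ≠ 0 := NeZero.ne _
  have hfactor (j : ℕ) : cexp (2 * Real.pi * I * ((b + j) / N) * n) =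
      cexp (2 * Real.pi * I * b * (n / N)) * (cexp (2 * Real.pi * I / N) ^ n) ^ j := by
    rw [← exp_nat_mul, ← exp_nat_mul, ← exp_add]
    congr 1
    field_simp
  simp_rw [hfactor, ← Finset.mul_sum,
    sum_pow_pow_of_isPrimitiveRoot (isPrimitiveRoot_exp N (NeZero.ne N)), mul_ite, mul_zero,
    mul_comm _ (N : ℂ)]

theorem sum_expZeta_add_div_of_one_lt_re (b : ℝ) {s : ℂ} (hs : 1 < s.re) :
    ∑ j ∈ Finset.range N, expZeta ((b + j) / N : ℝ) s = (N : ℂ) ^ (1 - s) * expZeta b s := by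
  have hN : (N : ℂ) ≠ 0 := NeZero.ne _
  have hinj : Function.Injective (N * ·) := mul_right_injective₀ (NeZero.ne N)
  have hsum := hasSum_sum (s := Finset.range N) fun j _ =>
    hasSum_expZeta_of_one_lt_re ((b + j) / N) hs
  simp_rw [← Finset.sum_div] at hsum
  push_cast at hsum
  simp_rw [sum_exp_add_div_mul] at hsum
  rw [← hinj.hasSum_iff fun n hn => by
    rw [if_neg fun ⟨m, hm⟩ => hn ⟨m, hm.symm⟩, zero_div]] at hsum
  have hterm (m : ℕ) : N * cexp (2 * Real.pi * I * b * ((N * m : ℕ) / N)) / ((N * m : ℕ) : ℂ) ^ s =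
      (N : ℂ) ^ (1 - s) * (cexp (2 * Real.pi * I * b * m) / (m : ℂ) ^ s) := by
    rw [Nat.cast_mul, natCast_mul_natCast_cpow, cpow_sub _ _ hN, cpow_one,
      mul_div_cancel_left₀ _ hN, div_mul_div_comm]
  refine hsum.unique (((hasSum_expZeta_of_one_lt_re b hs).mul_left _).congr_fun fun m => ?_)
  rw [Function.comp_apply, if_pos (dvd_mul_right N m), hterm]

theorem coe_add_natCast_div_ne_zero {b : ℝ} (hb : (b : UnitAddCircle) ≠ 0) (j : ℕ) :
    (((b + j) / N : ℝ) : UnitAddCircle) ≠ 0 := by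
  have hN : (N : ℝ) ≠ 0 := NeZero.ne _
  have hj : ((j : ℝ) : UnitAddCircle) = 0 := (AddCircle.coe_eq_zero_iff 1).mpr ⟨j, by simp⟩
  have hmul : N • (((b + j) / N : ℝ) : UnitAddCircle) = b := by
    rw [← AddCircle.coe_nsmul, nsmul_eq_mul, mul_div_cancel₀ _ hN, AddCircle.coe_add, hj, add_zero]
  intro h
  exact hb (by rw [← hmul, h, smul_zero])

theorem sum_expZeta_add_div (b : ℝ) {s : ℂ} (hs : s ≠ 1 ∨ (b : UnitAddCircle) ≠ 0) :
    ∑ j ∈ Finset.range N, expZeta ((b + j) / N : ℝ) s = (N : ℂ) ^ (1 - s) * expZeta b s := by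
  have hN : (N : ℂ) ≠ 0 := NeZero.ne _
  let U : Set ℂ := {s | s ≠ 1 ∨ (b : UnitAddCircle) ≠ 0}
  have hUopen : IsOpen U := isOpen_ne.union isOpen_const
  have hUconn : IsPreconnected U :=
    (isConnected_compl_singleton_of_one_lt_rank (by simp) 1).isPreconnected.subset_closure
      (fun _ => Or.inl) (by simp [(dense_compl_singleton (1 : ℂ)).closure_eq])
  have hleft : DifferentiableOn ℂ
      (fun s => ∑ j ∈ Finset.range N, expZeta ((b + j) / N : ℝ) s) U := fun u hu =>
    (DifferentiableAt.fun_sum fun j _ => differentiableAt_expZeta _ u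
      (hu.imp_right fun hb => coe_add_natCast_div_ne_zero N hb j)).differentiableWithinAt
  have hright : DifferentiableOn ℂ (fun s => (N : ℂ) ^ (1 - s) * expZeta b s) U := fun u hu =>
    ((differentiableAt_id.const_sub 1).const_cpow (Or.inl hN) |>.mul
      (differentiableAt_expZeta _ u hu)).differentiableWithinAt
  refine (hleft.analyticOnNhd hUopen).eqOn_of_preconnected_of_eventuallyEq
    (hright.analyticOnNhd hUopen) hUconn (z₀ := 2) (Or.inl (by norm_num)) ?_ hs
  filter_upwards [(isOpen_lt continuous_const continuous_re).mem_nhds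
    (show 1 < (2 : ℂ).re by norm_num)] with u hu
  exact sum_expZeta_add_div_of_one_lt_re N b hu

theorem sum_Pf_add_div (b : ℝ) {s : ℂ} (hs : s ≠ 1 ∨ (b : UnitAddCircle) ≠ 0) :
    ∑ j ∈ Finset.range N, Pf ((b + j) / N) s = (N : ℂ) ^ (1 - s) * Pf b s := by
  have hN : (N : ℝ) ≠ 0 := NeZero.ne _
  have hs' : s ≠ 1 ∨ ((1 - b : ℝ) : UnitAddCircle) ≠ 0 := by
    simpa only [AddCircle.coe_sub, AddCircle.coe_period, zero_sub, neg_ne_zero] using hs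
  have hreflect : ∑ j ∈ Finset.range N, expZeta (1 - (b + j) / N : ℝ) s =
      ∑ j ∈ Finset.range N, expZeta ((1 - b + j) / N : ℝ) s := by
    rw [← Finset.sum_range_reflect]
    refine Finset.sum_congr rfl fun j hj => ?_
    have hjN : j + 1 ≤ N := Finset.mem_range.mp hj
    rw [Nat.sub_sub, add_comm 1 j, Nat.cast_sub hjN]
    congr 2
    push_cast
    field_simp
    ring
  simp only [Pf, Finset.sum_add_distrib, hreflect, sum_expZeta_add_div N _ hs,
    sum_expZeta_add_div N _ hs', mul_add]

end Distribution

theorem Pf_one_sub (a : ℝ) (s : ℂ) : Pf (1 - a) s = Pf a s := by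
  simp only [Pf, sub_sub_cancel, add_comm]

theorem Pf_two_thirds (s : ℂ) : Pf (2 / 3) s = Pf (1 / 3) s := by
  rw [← Pf_one_sub]
  norm_num

theorem Pf_zero (s : ℂ) : Pf 0 s = 2 * riemannZeta s := by
  simp only [Pf, sub_zero, AddCircle.coe_period, AddCircle.coe_zero, expZeta_zero, two_mul]

theorem Pf_div_two_add_Pf_add_one_div_two (b : ℝ) {s : ℂ} (hs : s ≠ 1 ∨ (b : UnitAddCircle) ≠ 0) :
    Pf (b / 2) s + Pf ((b + 1) / 2) s = 2 ^ (1 - s) * Pf b s := by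
  simpa [Finset.sum_range_succ] using sum_Pf_add_div 2 b hs

theorem Pf_one_half {s : ℂ} (hs : s ≠ 1) :
    Pf (1 / 2) s = 2 * ((2 : ℂ) ^ (1 - s) - 1) * riemannZeta s := by
  have h : Pf 0 s + Pf (1 / 2) s = 2 ^ (1 - s) * Pf 0 s := by
    simpa using Pf_div_two_add_Pf_add_one_div_two 0 (Or.inl hs)
  rw [Pf_zero] at h
  linear_combination h

theorem Pf_one_third {s : ℂ} (hs : s ≠ 1) :
    Pf (1 / 3) s = ((3 : ℂ) ^ (1 - s) - 1) * riemannZeta s := by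
  have h : Pf 0 s + Pf (1 / 3) s + Pf (2 / 3) s = 3 ^ (1 - s) * Pf 0 s := by
    simpa [Finset.sum_range_succ] using sum_Pf_add_div 3 0 (Or.inl hs)
  rw [Pf_zero, Pf_two_thirds] at h
  linear_combination h / 2

theorem Pf_one_fourth {s : ℂ} (hs : s ≠ 1) :
    Pf (1 / 4) s = (2 : ℂ) ^ (1 - s) * ((2 : ℂ) ^ (1 - s) - 1) * riemannZeta s := by
  have h : Pf (1 / 4) s + Pf (3 / 4) s = 2 ^ (1 - s) * Pf (1 / 2) s := by
    convert Pf_div_two_add_Pf_add_one_div_two (1 / 2) (Or.inl hs) using 3 <;> norm_num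
  have hsymm : Pf (3 / 4) s = Pf (1 / 4) s := by
    rw [← Pf_one_sub]
    norm_num
  rw [hsymm, Pf_one_half hs] at h
  linear_combination h / 2

theorem Pf_one_sixth (s : ℂ) : Pf (1 / 6) s = ((2 : ℂ) ^ (1 - s) - 1) * Pf (1 / 3) s := by
  have hthird : ((1 / 3 : ℝ) : UnitAddCircle) ≠ 0 := by
    rw [Ne, AddCircle.coe_eq_zero_iff_of_mem_Ico (by norm_num)]
    norm_num
  have h : Pf (1 / 6) s + Pf (2 / 3) s = 2 ^ (1 - s) * Pf (1 / 3) s := by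
    convert Pf_div_two_add_Pf_add_one_div_two (1 / 3) (Or.inr hthird) using 3 <;> norm_num
  rw [Pf_two_thirds] at h
  linear_combination h

/-- for `s ≠ 1`, `P(s,1/2) = 2(2^{1−s} − 1)ζ(s)`, `P(s,1/3) = (3^{1−s} − 1)ζ(s)`,
`P(s,1/4) = 2^{1−s}(2^{1−s} − 1)ζ(s)`, `P(s,1/6) = (2^{1−s} − 1)(3^{1−s} − 1)ζ(s)`;
in particular `P(1,1/6) = 0`. -/
theorem P_special_values :
    (∀ s : ℂ, s ≠ 1 →
      Pf (1 / 2) s = 2 * ((2 : ℂ) ^ (1 - s) - 1) * riemannZeta s ∧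
      Pf (1 / 3) s = ((3 : ℂ) ^ (1 - s) - 1) * riemannZeta s ∧
      Pf (1 / 4) s = (2 : ℂ) ^ (1 - s) * ((2 : ℂ) ^ (1 - s) - 1) * riemannZeta s ∧
      Pf (1 / 6) s = ((2 : ℂ) ^ (1 - s) - 1) * ((3 : ℂ) ^ (1 - s) - 1) * riemannZeta s) ∧
    Pf (1 / 6) 1 = 0 := by
  refine ⟨fun s hs => ⟨Pf_one_half hs, Pf_one_third hs, Pf_one_fourth hs, ?_⟩, ?_⟩
  · rw [Pf_one_sixth, Pf_one_third hs, mul_assoc]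
  · rw [Pf_one_sixth, sub_self, cpow_zero, sub_self, zero_mul]
end
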